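/- arXiv:math/0503447 — 2 statements merged into one kernel-verified Lean document; each statement's English description precedes it below -/
import Mathlib

section
/- Let E be a finite-dimensional real inner product space, let Γ and Λ be full ℤ-lattices in E, and let p be a prime. Then n(Γ,[Λ]) · |Aut(Λ)| = n(Λ,[Γ]) · |Aut(Γ)|, where n(Γ,[Λ]) is the number of p-neighbours of Γ that are isometric to Λ and Aut(Λ) is the automorphism group of Λ. (This is the self-adjointness of the Kneser neighbouring operator K_p.) -/
/-- The automorphism group of a lattice `Λ ⊆ E`: linear isometries of `E`
preserving `Λ`, realized as a set of linear isometric equivalences. -/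
def latticeAut {E : Type*} [NormedAddCommGroup E] [InnerProductSpace ℝ E]
    (Λ : Submodule ℤ E) : Set (E ≃ₗᵢ[ℝ] E) :=
  {g | ∀ x : E, g x ∈ Λ ↔ x ∈ Λ}

/-- The index of a submodule `X` of `E` in `Γ`, i.e. the index of `X ∩ Γ` in `Γ`. -/
noncomputable def latticeRelIndex {E : Type*} [AddCommGroup E] [Module ℤ E]
    (Γ X : Submodule ℤ E) : ℕ :=
  (X.toAddSubgroup.addSubgroupOf Γ.toAddSubgroup).index

/-- `Γ'` is a `p`-neighbour of `Γ` if `Γ ∩ Γ'` has index `p` in both `Γ` and `Γ'`. -/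
def IsPNeighbour {E : Type*} [AddCommGroup E] [Module ℤ E]
    (p : ℕ) (Γ Γ' : Submodule ℤ E) : Prop :=
  latticeRelIndex Γ (Γ ⊓ Γ') = p ∧ latticeRelIndex Γ' (Γ ⊓ Γ') = p

/-- `n(Γ,[Λ])`: the number of `p`-neighbours of `Γ` that are isometric to `Λ`. -/
noncomputable def neighbourCount {E : Type*} [NormedAddCommGroup E]
    [InnerProductSpace ℝ E] (p : ℕ) (Γ Λ : Submodule ℤ E) : ℕ :=
  Nat.card {Γ' : Submodule ℤ E //
    IsPNeighbour p Γ Γ' ∧ ∃ g : E ≃ₗᵢ[ℝ] E, ∀ x : E, g x ∈ Γ' ↔ x ∈ Λ}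

/-!
Let the isometry group `G` of `E` act on the subgroups of `E`. The fibres of `g ↦ g • Λ` over the
orbit of `Λ` are cosets of `Aut(Λ)`, so `n(Γ,[Λ]) · |Aut(Λ)|` counts the `g ∈ G` for which `g • Λ`
is a `p`-neighbour of `Γ`. Being `p`-neighbours is a symmetric `G`-invariant relation, hence
`g ↦ g⁻¹` matches these `g` with those for which `g • Γ` is a `p`-neighbour of `Λ`.
-/

open MulAction
open scoped Pointwise

section Orbit

variable {G X : Type*} [Group G] [MulAction G X]

theorem card_inter_orbit_mul_card_stabilizer (s : Set X) (x : X) :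
    ENat.card ↥(s ∩ orbit G x) * ENat.card (stabilizer G x) = ENat.card {g : G | g • x ∈ s} := by
  let t : Set (G ⧸ stabilizer G x) := ofQuotientStabilizer G x ⁻¹' s
  have image_t : ofQuotientStabilizer G x '' t = s ∩ orbit G x := by
    rw [Set.image_preimage_eq_inter_range]
    congr 1
    ext y
    exact QuotientGroup.mk_surjective.exists
  have card_t : ENat.card t = ENat.card ↥(s ∩ orbit G x) := by
    rw [← image_t]
    exact (ENat.card_image_of_injective _ _ (injective_ofQuotientStabilizer G x)).symm
  rw [← card_t, mul_comm, ← ENat.card_prod]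
  exact (ENat.card_congr (QuotientGroup.preimageMkEquivSubgroupProdSet (stabilizer G x) t)).symm

theorem card_rel_inter_orbit_mul_card_stabilizer_comm {r : X → X → Prop}
    (r_symm : ∀ {x y}, r x y → r y x) (r_smul : ∀ (g : G) {x y}, r x y → r (g • x) (g • y))
    (x y : X) :
    ENat.card ↥({z | r x z} ∩ orbit G y) * ENat.card (stabilizer G y) =
      ENat.card ↥({z | r y z} ∩ orbit G x) * ENat.card (stabilizer G x) := by
  have r_inv_smul {x y : X} (g : G) (h : r x (g • y)) : r y (g⁻¹ • x) := by
    simpa only [inv_smul_smul] using r_symm (r_smul g⁻¹ h)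
  rw [card_inter_orbit_mul_card_stabilizer, card_inter_orbit_mul_card_stabilizer]
  exact ENat.card_congr <| (Equiv.inv G).subtypeEquiv fun g ↦
    ⟨r_inv_smul g, fun h ↦ inv_inv g ▸ r_inv_smul g⁻¹ h⟩

end Orbit

section Neighbour

variable {M : Type*} [AddCommGroup M] {p : ℕ} {Γ Γ' : Submodule ℤ M}

theorem IsPNeighbour.symm (h : IsPNeighbour p Γ Γ') : IsPNeighbour p Γ' Γ := by
  rw [IsPNeighbour, inf_comm]
  exact And.symm h

variable {G : Type*} [Group G] [DistribMulAction G M]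

theorem latticeRelIndex_smul (g : G) (Γ X : Submodule ℤ M) :
    latticeRelIndex (g • Γ) (g • X) = latticeRelIndex Γ X :=
  AddSubgroup.relIndex_pointwise_smul g X.toAddSubgroup Γ.toAddSubgroup

theorem IsPNeighbour.smul (g : G) (h : IsPNeighbour p Γ Γ') :
    IsPNeighbour p (g • Γ) (g • Γ') := by
  have smul_inf : g • Γ ⊓ g • Γ' = g • (Γ ⊓ Γ') :=
    SetLike.coe_injective (Set.smul_set_inter (a := g)).symm
  rwa [IsPNeighbour, smul_inf, latticeRelIndex_smul, latticeRelIndex_smul]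

theorem neighbourCount_mul_card_aut_symm_general (Γ Λ : Submodule ℤ M) (p : ℕ) :
    ENat.card ↥({Γ' | IsPNeighbour p Γ Γ'} ∩ orbit G Λ) * ENat.card (stabilizer G Λ) =
      ENat.card ↥({Λ' | IsPNeighbour p Λ Λ'} ∩ orbit G Γ) * ENat.card (stabilizer G Γ) :=
  card_rel_inter_orbit_mul_card_stabilizer_comm (r := IsPNeighbour p)
    (fun h ↦ h.symm) (fun g _ _ h ↦ h.smul g) Γ Λ

end Neighbour

section Isometry

theorem smul_submodule_eq_iff_forall_mem {G R M : Type*} [Group G] [Semiring R] [AddCommMonoid M]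
    [Module R M] [DistribMulAction G M] [SMulCommClass G R M] (g : G) (Λ Λ' : Submodule R M) :
    g • Λ = Λ' ↔ ∀ x, g • x ∈ Λ' ↔ x ∈ Λ := by
  constructor
  · rintro rfl x
    exact Set.smul_mem_smul_set_iff
  · intro h
    ext x
    rw [← smul_inv_smul g x, h]
    exact Set.smul_mem_smul_set_iff

/-- The tautological action of the linear isometries of `E` on `E`, which makes
`E ≃ₗᵢ[R] E` act on the subgroups of `E`. -/
instance isometryDistribMulAction {R E : Type*} [Semiring R] [SeminormedAddCommGroup E]
    [Module R E] : DistribMulAction (E ≃ₗᵢ[R] E) E where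
  smul g x := g x
  one_smul _ := rfl
  mul_smul _ _ _ := rfl
  smul_zero g := map_zero g
  smul_add g := map_add g

variable {E : Type*} [NormedAddCommGroup E] [InnerProductSpace ℝ E]

theorem latticeAut_eq_stabilizer (Λ : Submodule ℤ E) :
    latticeAut Λ = stabilizer (E ≃ₗᵢ[ℝ] E) Λ := by
  ext g
  exact (smul_submodule_eq_iff_forall_mem g Λ Λ).symm

theorem neighbourCount_eq_card_inter_orbit (p : ℕ) (Γ Λ : Submodule ℤ E) :
    neighbourCount p Γ Λ =
      Nat.card ↥({Γ' | IsPNeighbour p Γ Γ'} ∩ orbit (E ≃ₗᵢ[ℝ] E) Λ) :=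
  Nat.card_congr <| Equiv.subtypeEquivRight fun Γ' ↦ and_congr_right' <|
    exists_congr fun g ↦ (smul_submodule_eq_iff_forall_mem g Λ Γ').symm

end Isometry

/-- Self-adjointness of the Kneser neighbouring operator `K_p`: for full
`ℤ`-lattices `Γ, Λ` in a finite-dimensional real inner product space and a prime
`p`, one has `n(Γ,[Λ]) · |Aut(Λ)| = n(Λ,[Γ]) · |Aut(Γ)|`. -/
theorem neighbourCount_mul_card_aut_symm
    {E : Type*} [NormedAddCommGroup E] [InnerProductSpace ℝ E] [FiniteDimensional ℝ E]
    (Γ Λ : Submodule ℤ E)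
    [DiscreteTopology Γ] [IsZLattice ℝ Γ] [DiscreteTopology Λ] [IsZLattice ℝ Λ]
    (p : ℕ) (hp : p.Prime) :
    neighbourCount p Γ Λ * Nat.card (latticeAut Λ) =
      neighbourCount p Λ Γ * Nat.card (latticeAut Γ) := by
  simpa only [neighbourCount_eq_card_inter_orbit, latticeAut_eq_stabilizer, ENat.toNat_mul] using!
    congrArg ENat.toNat (neighbourCount_mul_card_aut_symm_general (G := E ≃ₗᵢ[ℝ] E) Γ Λ p)
end

section
/- Let V be a finite-dimensional complex inner product space, let S be a family of pairwise commuting self-adjoint endomorphisms of V, and let U be a subspace of V invariant under every operator in S. Let d ∈ V be a nonzero simultaneous eigenvector of all operators in S (say T·d = c_T·d for each T ∈ S), and assume d spans its full simultaneous eigenspace, i.e., every x ∈ V with T·x = c_T·x for all T ∈ S is a scalar multiple of d. Then d ∈ U or d ∈ U^⊥. -/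
/-!
Orthogonal projection onto a subspace `U` invariant under symmetric operators commutes with all
of them, so it preserves their simultaneous eigenspaces. On a one-dimensional simultaneous
eigenspace it therefore acts as a scalar, and a vector it scales lies in `Uᗮ` or `U` according to
whether the scalar vanishes.
-/

section

open Module.End Submodule

variable {𝕜 E : Type*} [RCLike 𝕜] [NormedAddCommGroup E] [InnerProductSpace 𝕜 E]
  {U : Submodule 𝕜 E} [U.HasOrthogonalProjection]

theorem commute_starProjection_of_mem_invtSubmodule {T : E →ₗ[𝕜] E} (hT : T.IsSymmetric)
    (hU : U ∈ invtSubmodule T) : Commute (U.starProjection : E →ₗ[𝕜] E) T := by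
  rw [LinearMap.IsIdempotentElem.commute_iff
      (ContinuousLinearMap.IsIdempotentElem.toLinearMap U.isIdempotentElem_starProjection),
    range_starProjection, ker_starProjection]
  exact ⟨hU, hT.orthogonalComplement_mem_invtSubmodule hU⟩

theorem starProjection_mem_eigenspace {T : E →ₗ[𝕜] E} (hT : T.IsSymmetric)
    (hU : U ∈ invtSubmodule T) {μ : 𝕜} {x : E} (hx : x ∈ eigenspace T μ) :
    U.starProjection x ∈ eigenspace T μ :=
  mapsTo_genEigenspace_of_comm (commute_starProjection_of_mem_invtSubmodule hT hU).symm μ 1 hx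

theorem mem_or_mem_orthogonal_of_starProjection_eq_smul {x : E} {a : 𝕜}
    (hx : U.starProjection x = a • x) : x ∈ U ∨ x ∈ Uᗮ := by
  obtain rfl | ha := eq_or_ne a 0
  · right
    rwa [zero_smul, starProjection_apply_eq_zero_iff] at hx
  · left
    rw [← U.smul_mem_iff ha, ← hx]
    exact U.starProjection_apply_mem x

theorem simultaneous_eigenvector_mem_or_mem_orthogonal_general {S : Set (E →ₗ[𝕜] E)}
    (hsymm : ∀ T ∈ S, T.IsSymmetric) (hU : ∀ T ∈ S, U ∈ invtSubmodule T)
    {d : E} {c : (E →ₗ[𝕜] E) → 𝕜} (heig : ∀ T ∈ S, T d = c T • d)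
    (hfull : ∀ x : E, (∀ T ∈ S, T x = c T • x) → ∃ a : 𝕜, x = a • d) :
    d ∈ U ∨ d ∈ Uᗮ := by
  have hproj : ∀ T ∈ S, T (U.starProjection d) = c T • U.starProjection d := fun T hT ↦
    mem_eigenspace_iff.mp <|
      starProjection_mem_eigenspace (hsymm T hT) (hU T hT) (mem_eigenspace_iff.mpr (heig T hT))
  obtain ⟨a, ha⟩ := hfull _ hproj
  exact mem_or_mem_orthogonal_of_starProjection_eq_smul ha

end

/-- Let `V` be a finite-dimensional complex inner product space, `S` a family of
pairwise commuting self-adjoint endomorphisms of `V`, and `U` a subspace invariant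
under every operator in `S`. If `d ≠ 0` is a simultaneous eigenvector of all
operators in `S` (with eigenvalue system `c`) spanning its full simultaneous
eigenspace, then `d ∈ U` or `d ∈ Uᗮ`. -/
theorem simultaneous_eigenvector_mem_or_mem_orthogonal
    {V : Type*} [NormedAddCommGroup V] [InnerProductSpace ℂ V] [FiniteDimensional ℂ V]
    (S : Set (V →ₗ[ℂ] V))
    (hcomm : ∀ T ∈ S, ∀ T' ∈ S, T ∘ₗ T' = T' ∘ₗ T)
    (hsa : ∀ T ∈ S, LinearMap.IsSymmetric T)
    (U : Submodule ℂ V) (hU : ∀ T ∈ S, ∀ x ∈ U, T x ∈ U)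
    (d : V) (hd : d ≠ 0) (c : (V →ₗ[ℂ] V) → ℂ)
    (heig : ∀ T ∈ S, T d = c T • d)
    (hfull : ∀ x : V, (∀ T ∈ S, T x = c T • x) → ∃ a : ℂ, x = a • d) :
    d ∈ U ∨ d ∈ Uᗮ :=
  simultaneous_eigenvector_mem_or_mem_orthogonal_general hsa hU heig hfull
end
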